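/- (Spohn's theorem) No Euler brick produced by the Saunderson parametrization is perfect: if u, v, w are positive integers with u^2 + v^2 = w^2 and a = u·(4v^2 - w^2), b = v·(4u^2 - w^2), c = 4uvw, then a^2 + b^2 + c^2 is not a perfect square. -/

import Mathlib

/-!
Since `u² + v² = w²`, the sum of squares equals `w² (u⁴ + 18 u² v² + v⁴)`, so it suffices that
the quartic `u⁴ + 18 u² v² + v⁴` is not a square (Pocklington). After division by `gcd(u, v)`
the legs `u`, `v` of the Pythagorean triple are coprime and of opposite parity, and in that case
the claim follows by infinite descent on `|uv|`.

If `k² = u⁴ + 18 u² v² + v⁴ = (u² + v²)² + (4uv)²`, then `(u² + v², 4uv, k)` is a primitive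
Pythagorean triple, so `u² + v² = p² - 4r²` and `uv = pr`. Writing `u = ab`, `v = cd`, `p = ac`,
`r = bd`, the first equation becomes `a² (c² - b²) = d² (c² + 4b²)`, and coprimality gives
`c² - b² = g d²`, `c² + 4b² = g a²` with `g ∣ 5`. If `g = 1`, this reads `c² = b² + d²`,
`a² = c² + 4b²`; if `g = 5`, it is equivalent to `a² = d² + b²`, `c² = a² + 4d²`, the same system
in other letters. Parametrizing the primitive triple `X² = Y² + Z²` of such a system as
`X = m² + n²`, `Y = 2mn` turns `T² = X² + 4Y²` into `T² = m⁴ + 18 m² n² + n⁴`, where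
`0 < 2|mn| = |Y| ≤ |uv|`, a smaller solution.
-/

/-- A solution with `X`, `Y` coprime of the system `X² = Y² + Z²`, `T² = X² + 4Y²` arises from a value of
Pocklington's quartic that is a square. Modulo 8, `Y` is the even leg. -/
lemma pocklington_of_system {X Y Z T : ℤ} (hXY : IsCoprime X Y)
    (h1 : X ^ 2 = Y ^ 2 + Z ^ 2) (h2 : T ^ 2 = X ^ 2 + 4 * Y ^ 2) :
    ∃ m n : ℤ, Y = 2 * m * n ∧ IsCoprime m n ∧ (m + n) % 2 = 1 ∧
      m ^ 4 + 18 * m ^ 2 * n ^ 2 + n ^ 4 = T ^ 2 := by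
  have hZY : IsCoprime Z Y := by
    have : IsCoprime (Z ^ 2) Y := by
      have h3 : IsCoprime (X ^ 2) Y := hXY.pow_left
      have h4 : Z ^ 2 = X ^ 2 + Y * (-Y) := by linear_combination -h1
      rw [h4]
      exact h3.add_mul_left_left _
    exact (IsCoprime.pow_left_iff (by norm_num)).1 this
  have hZ : Z % 2 = 1 := by
    by_contra hZ
    obtain ⟨z, rfl⟩ : ∃ z, Z = 2 * z := ⟨Z / 2, by omega⟩
    have hY : Y % 2 = 1 := by
      by_contra hY
      have := hZY.isUnit_of_dvd' (x := 2) (Dvd.intro _ rfl) (by omega)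
      norm_num [Int.isUnit_iff] at this
    have hX : X % 2 = 1 := by
      have := congrArg (· % 2) h1
      rcases Int.emod_two_eq_zero_or_one X with h | h
      · simp [pow_two, Int.add_emod, Int.mul_emod, h, hY] at this
      · exact h
    have hT : T % 2 = 1 := by
      have := congrArg (· % 2) h2
      rcases Int.emod_two_eq_zero_or_one T with h | h
      · simp [pow_two, Int.add_emod, Int.mul_emod, h, hX] at this
      · exact h
    -- With `X`, `Y`, `T` odd, `T² = X² + 4Y²` reads `1 = 1 + 4` modulo 8.
    obtain ⟨y, rfl⟩ : ∃ y, Y = 2 * y + 1 := ⟨Y / 2, by omega⟩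
    obtain ⟨x, rfl⟩ : ∃ x, X = 2 * x + 1 := ⟨X / 2, by omega⟩
    obtain ⟨t, rfl⟩ : ∃ t, T = 2 * t + 1 := ⟨T / 2, by omega⟩
    obtain ⟨t', ht⟩ := Int.even_mul_succ_self t
    obtain ⟨x', hx⟩ := Int.even_mul_succ_self x
    obtain ⟨y', hy⟩ := Int.even_mul_succ_self y
    have : 8 * t' = 8 * x' + 32 * y' + 4 := by
      linear_combination h2 - 4 * ht + 4 * hx + 16 * hy
    omega
  have hpt : PythagoreanTriple Z Y |X| := by
    unfold PythagoreanTriple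
    rw [abs_mul_abs_self]
    linear_combination -h1
  have hXpos : 0 < |X| := by
    rw [abs_pos]
    rintro rfl
    have : Z = 0 := by nlinarith [sq_nonneg Y, sq_nonneg Z]
    omega
  obtain ⟨m, n, -, hY, hX, hmn, hpar, -⟩ :=
    hpt.coprime_classification' (Int.isCoprime_iff_gcd_eq_one.1 hZY) hZ hXpos
  refine ⟨m, n, hY, Int.isCoprime_iff_gcd_eq_one.2 hmn, by omega, ?_⟩
  rw [h2, ← sq_abs X, hX, hY]
  ring

/-- The first half of the descent step: a square value of the quartic yields a solution of the
system of `pocklington_of_system` with `Y ∣ u * v`. -/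
lemma system_of_pocklington {u v k : ℤ} (hu : u ≠ 0) (hv : v ≠ 0)
    (huv : IsCoprime u v) (hpar : (u + v) % 2 = 1)
    (h : u ^ 4 + 18 * u ^ 2 * v ^ 2 + v ^ 4 = k ^ 2) :
    ∃ X Y Z T : ℤ, Y ∣ u * v ∧ IsCoprime X Y ∧ X ^ 2 = Y ^ 2 + Z ^ 2 ∧
      T ^ 2 = X ^ 2 + 4 * Y ^ 2 := by
  have hodd4 : (u ^ 2 + v ^ 2) % 4 = 1 := by
    rcases Int.even_or_odd' u with ⟨x, rfl | rfl⟩ <;>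
    rcases Int.even_or_odd' v with ⟨y, rfl | rfl⟩ <;> ring_nf <;> omega
  have hcop : IsCoprime (u ^ 2 + v ^ 2) (4 * u * v) := by
    have e2 : IsCoprime (u ^ 2 + v ^ 2) 4 := by
      refine ⟨1, -((u ^ 2 + v ^ 2) / 4), ?_⟩
      omega
    refine (e2.mul_right (Int.isCoprime_of_sq_sum huv.symm)).mul_right ?_
    rw [add_comm]
    exact Int.isCoprime_of_sq_sum huv
  have hpt : PythagoreanTriple (u ^ 2 + v ^ 2) (4 * u * v) |k| := by
    unfold PythagoreanTriple
    rw [abs_mul_abs_self]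
    linear_combination h
  have hk : 0 < |k| := by
    rw [abs_pos]
    rintro rfl
    have : 0 < u ^ 4 := by positivity
    nlinarith [sq_nonneg (u * v), sq_nonneg (v ^ 2)]
  obtain ⟨p, q, h1, h2, -, -, hpq, -⟩ :=
    hpt.coprime_classification' (Int.isCoprime_iff_gcd_eq_one.1 hcop) (by omega) hk
  -- `p² - q² ≡ 1` modulo 4 excludes that `p` is the even parameter.
  have hq : q % 2 = 0 := by
    rcases hpq with ⟨hp, hq⟩ | ⟨hp, hq⟩
    · obtain ⟨x, rfl⟩ : ∃ x, p = 2 * x := ⟨p / 2, by omega⟩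
      obtain ⟨y, rfl⟩ : ∃ x, q = 2 * x + 1 := ⟨q / 2, by omega⟩
      ring_nf at h1 hodd4
      omega
    · exact hq
  obtain ⟨r, rfl⟩ : ∃ r, q = 2 * r := ⟨q / 2, by omega⟩
  have h3 : p * r = u * v := by linarith
  -- Four-number factorization of `p r = u v`.
  obtain ⟨a, c, ⟨b, rfl⟩, ⟨d, rfl⟩, rfl⟩ := exists_dvd_and_dvd_of_dvd_mul (Dvd.intro _ h3)
  obtain ⟨ha, hb⟩ := mul_ne_zero_iff.1 hu
  obtain ⟨hc, hd⟩ := mul_ne_zero_iff.1 hv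
  have hr : r = b * d := by
    apply mul_left_cancel₀ (mul_ne_zero ha hc)
    linear_combination h3
  subst hr
  have had : IsCoprime a d := huv.of_mul_left_left.of_mul_right_right
  have hbc : IsCoprime b c := huv.of_mul_left_right.of_mul_right_left
  have h4 : a ^ 2 * (c ^ 2 - b ^ 2) = d ^ 2 * (c ^ 2 + 4 * b ^ 2) := by linear_combination -h1
  obtain ⟨g, hg⟩ : d ^ 2 ∣ c ^ 2 - b ^ 2 :=
    (had.symm.pow (m := 2) (n := 2)).dvd_of_dvd_mul_left (Dvd.intro _ h4.symm)
  have hg' : c ^ 2 + 4 * b ^ 2 = a ^ 2 * g := by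
    apply mul_left_cancel₀ (pow_ne_zero 2 hd)
    rw [← h4, hg]
    ring
  have hg5 : g ∣ 5 := by
    have hb5 : g ∣ b ^ 2 * 5 := ⟨a ^ 2 - d ^ 2, by linear_combination hg' - hg⟩
    have hc5 : g ∣ c ^ 2 * 5 := ⟨a ^ 2 + 4 * d ^ 2, by linear_combination hg' + 4 * hg⟩
    obtain ⟨s, t, hst⟩ := hbc.pow (m := 2) (n := 2)
    have : (5 : ℤ) = s * (b ^ 2 * 5) + t * (c ^ 2 * 5) := by linear_combination -5 * hst
    rw [this]
    exact dvd_add (hb5.mul_left _) (hc5.mul_left _)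
  have hgpos : 0 < g := by
    have : 0 < a ^ 2 * g := by rw [← hg']; positivity
    exact pos_of_mul_pos_right this (sq_nonneg a)
  have hgle : g ≤ 5 := Int.le_of_dvd (by norm_num) hg5
  have : g = 1 ∨ g = 5 := by
    interval_cases g <;> revert hg5 <;> decide
  rcases this with rfl | rfl
  · exact ⟨c, b, d, a, ⟨a * (c * d), by ring⟩, hbc.symm, by linear_combination hg,
      by linear_combination -hg'⟩
  · exact ⟨a, d, b, c, ⟨a * b * c, by ring⟩, had, by linarith, by linarith⟩

/-- Pocklington's lemma for nonzero coprime arguments of opposite parity; the descent is strong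
induction on `N = |u * v|`. -/
lemma pocklington (N : ℕ) : ∀ u v k : ℤ, (u * v).natAbs = N → u ≠ 0 → v ≠ 0 →
    IsCoprime u v → (u + v) % 2 = 1 → u ^ 4 + 18 * u ^ 2 * v ^ 2 + v ^ 4 ≠ k ^ 2 := by
  induction N using Nat.strong_induction_on with
  | _ N ih =>
    intro u v k hN hu hv huv hpar h
    obtain ⟨X, Y, Z, T, hY, hXY, h1, h2⟩ := system_of_pocklington hu hv huv hpar h
    obtain ⟨m, n, rfl, hmn, hpar', h3⟩ := pocklington_of_system hXY h1 h2
    have huv0 : u * v ≠ 0 := mul_ne_zero hu hv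
    have hY0 : 2 * m * n ≠ 0 := ne_zero_of_dvd_ne_zero huv0 hY
    have hm : m ≠ 0 := by rintro rfl; simp at hY0
    have hn : n ≠ 0 := by rintro rfl; simp at hY0
    refine ih _ ?_ m n T rfl hm hn hmn hpar' h3
    have hle := Int.natAbs_le_of_dvd_ne_zero hY huv0
    have hpos := Int.natAbs_pos.2 (mul_ne_zero hm hn)
    rw [mul_assoc, Int.natAbs_mul] at hle
    change 2 * _ ≤ _ at hle
    omega

/-- Spohn's theorem: no Euler brick produced by the Saunderson parametrization
is perfect.  If `u, v, w` are positive integers with `u^2 + v^2 = w^2` and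
`a = u(4v^2 - w^2)`, `b = v(4u^2 - w^2)`, `c = 4uvw`, then `a^2 + b^2 + c^2` is
not a perfect square. -/
theorem spohn (u v w : ℤ) (hu : 0 < u) (hv : 0 < v) (hw : 0 < w)
    (h : u ^ 2 + v ^ 2 = w ^ 2) :
    ¬ ∃ k : ℤ, (u * (4 * v ^ 2 - w ^ 2)) ^ 2 + (v * (4 * u ^ 2 - w ^ 2)) ^ 2 +
        (4 * u * v * w) ^ 2 = k ^ 2 := by
  rintro ⟨k, hk⟩
  have hk' : w ^ 2 * (u ^ 4 + 18 * u ^ 2 * v ^ 2 + v ^ 4) = k ^ 2 := by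
    rw [← hk, mul_pow (4 * u * v) w, ← h]
    ring
  obtain ⟨l, rfl⟩ := (Int.pow_dvd_pow_iff (by norm_num)).1 (Dvd.intro _ hk')
  have hl : u ^ 4 + 18 * u ^ 2 * v ^ 2 + v ^ 4 = l ^ 2 := by
    apply mul_left_cancel₀ (pow_ne_zero 2 hw.ne')
    linear_combination hk'
  obtain ⟨g, x, y, hg, hxy, rfl, rfl⟩ :
      ∃ g x y : ℤ, g ≠ 0 ∧ IsCoprime x y ∧ u = x * g ∧ v = y * g := by
    obtain ⟨x, y, hxy, h1, h2⟩ := Int.exists_gcd_one (m := u) (n := v)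
      (Int.gcd_pos_of_ne_zero_left _ hu.ne')
    refine ⟨Int.gcd u v, x, y, ?_, Int.isCoprime_iff_gcd_eq_one.2 hxy, h1, h2⟩
    exact_mod_cast (Int.gcd_pos_of_ne_zero_left v hu.ne').ne'
  have hx : x ≠ 0 := by rintro rfl; simp at hu
  have hy : y ≠ 0 := by rintro rfl; simp at hv
  obtain ⟨z, rfl⟩ : g ∣ w := (Int.pow_dvd_pow_iff (n := 2) (by norm_num)).1
    ⟨x ^ 2 + y ^ 2, by linear_combination -h⟩
  obtain ⟨t, rfl⟩ : g ^ 2 ∣ l := (Int.pow_dvd_pow_iff (n := 2) (by norm_num)).1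
    ⟨x ^ 4 + 18 * x ^ 2 * y ^ 2 + y ^ 4, by linear_combination -hl⟩
  have hz : x * x + y * y = z * z := by
    apply mul_left_cancel₀ (pow_ne_zero 2 hg)
    linear_combination h
  have ht : x ^ 4 + 18 * x ^ 2 * y ^ 2 + y ^ 4 = t ^ 2 := by
    apply mul_left_cancel₀ (pow_ne_zero 4 hg)
    linear_combination hl
  have hpar := PythagoreanTriple.even_odd_of_coprime (x := x) (y := y) (z := z) hz
    (Int.isCoprime_iff_gcd_eq_one.1 hxy)
  exact pocklington _ x y t rfl hx hy hxy (by omega) ht
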